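/- arXiv:2509.02162 — 5 statements merged into one kernel-verified Lean document; each statement's English description precedes it below -/
import Mathlib

section
/- Let n ≥ 2, let H = u⊥ + t₀u for a unit vector u ∈ ℝⁿ and t₀ ∈ ℝ, let 𝓔 ⊂ 𝓛ⁿ be a class of sets that contains all closed balls in ℝⁿ, and suppose ∂ : 𝓔 → 𝓛ⁿ is monotonic, respects H-cylinders, and maps balls to balls. Then there is a contraction φ_∂ : ℝ → ℝ (a 1-Lipschitz function) such that ∂B(x + tu, r) = B(x + φ_∂(t)u, r), essentially, for all x ∈ u⊥, t ∈ ℝ, and r > 0. -/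
open MeasureTheory Metric Filter Topology
open scoped RealInnerProductSpace

noncomputable section

abbrev Euc (n : ℕ) : Type := EuclideanSpace ℝ (Fin n)

/-- `A` is essentially contained in `B` (up to a set of measure zero). -/
def essSub {n : ℕ} (A B : Set (Euc n)) : Prop := volume (A \ B) = 0

/-- `A` is essentially equal to `B` (up to a set of measure zero). -/
def essEq {n : ℕ} (A B : Set (Euc n)) : Prop := volume ((A \ B) ∪ (B \ A)) = 0

/-- The infinite spherical cylinder of radius `ρ` whose axis passes through `c`
in direction `u`; for `c` in the hyperplane `H` orthogonal to `u`, this is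
`D + span{u}` for the closed ball `D` in `H` with centre `c` and radius `ρ`. -/
def cyl {n : ℕ} (u c : Euc n) (ρ : ℝ) : Set (Euc n) :=
  {y | ‖(y - c) - ⟪y - c, u⟫ • u‖ ≤ ρ}

theorem aux_dir {E : Type*} [NormedAddCommGroup E] [NormedSpace ℝ E] (q v : E) (hv : ‖v‖ = 1)
    (r : ℝ) (hr : 0 < r) : ∃ w : E, ‖w‖ = 1 ∧ ‖q + r • w‖ = ‖q‖ + r ∧ (w = v ∨ ∃ k : ℝ, w = k • q) := by
  by_cases hq : q = 0
  · refine ⟨v, hv, ?_, Or.inl rfl⟩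
    subst hq
    simp [norm_smul, hv, abs_of_pos hr]
  · have hq' : 0 < ‖q‖ := norm_pos_iff.2 hq
    refine ⟨‖q‖⁻¹ • q, ?_, ?_, Or.inr ⟨_, rfl⟩⟩
    · rw [norm_smul, norm_inv, norm_norm, inv_mul_cancel₀ hq'.ne']
    · have : q + r • ‖q‖⁻¹ • q = (1 + r * ‖q‖⁻¹) • q := by
        rw [add_smul, one_smul, smul_smul]
      rw [this, norm_smul, Real.norm_of_nonneg (by positivity)]
      field_simp

theorem aux_sub {n : ℕ} (a : Euc n) (r : ℝ) (hr : 0 < r) (C : Set (Euc n)) (hC : IsClosed C)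
    (h : essSub (closedBall a r) C) : closedBall a r ⊆ C := by
  have h1 : volume (ball a r \ C) = 0 :=
    measure_mono_null (Set.diff_subset_diff_left ball_subset_closedBall) h
  have h2 : ball a r \ C = ∅ := (isOpen_ball.sdiff hC).measure_eq_zero_iff volume |>.1 h1
  rw [← closure_ball a hr.ne']
  exact closure_minimal (Set.diff_eq_empty.1 h2) hC

theorem aux_balls {n : ℕ} (v : Euc n) (hv : ‖v‖ = 1) (a b : Euc n) (r s : ℝ) (hr : 0 < r)
    (h : closedBall a r ⊆ closedBall b s) : ‖a - b‖ ≤ s - r := by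
  obtain ⟨w, hw, hw2, -⟩ := aux_dir (a - b) v hv r hr
  have : a + r • w ∈ closedBall b s := h (by simp [norm_smul, hw, abs_of_pos hr])
  rw [mem_closedBall, dist_eq_norm, show a + r • w - b = a - b + r • w by abel, hw2] at this
  linarith

theorem aux_cyl {n : ℕ} (u v : Euc n) (hu : ‖u‖ = 1) (hv : ‖v‖ = 1) (huv : ⟪v, u⟫ = 0)
    (a c : Euc n) (r s : ℝ) (hr : 0 < r)
    (h : closedBall a r ⊆ cyl u c s) : ‖(a - c) - ⟪a - c, u⟫ • u‖ + r ≤ s := by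
  obtain ⟨w, hw, hw2, hw3⟩ := aux_dir ((a - c) - ⟪a - c, u⟫ • u) v hv r hr
  have hwu : ⟪w, u⟫ = 0 := by
    rcases hw3 with rfl | ⟨k, rfl⟩
    · exact huv
    · simp [inner_smul_left, inner_sub_left, real_inner_self_eq_norm_sq, hu]
  have : a + r • w ∈ cyl u c s := h (by simp [norm_smul, hw, abs_of_pos hr])
  simp only [cyl, Set.mem_setOf_eq] at this
  rw [show a + r • w - c = a - c + r • w by abel, inner_add_left, inner_smul_left, hwu, mul_zero,
    add_zero, show a - c + r • w - ⟪a - c, u⟫ • u = (a - c) - ⟪a - c, u⟫ • u + r • w by abel,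
    hw2] at this
  exact this

theorem aux_cyl_closed {n : ℕ} (u c : Euc n) (s : ℝ) : IsClosed (cyl u c s) := by
  apply isClosed_le <;> fun_prop

theorem aux_perp {n : ℕ} (hn : 2 ≤ n) (u : Euc n) : ∃ v : Euc n, ‖v‖ = 1 ∧ ⟪v, u⟫ = 0 := by
  have h1 : (ℝ ∙ u)ᗮ ≠ ⊥ := by
    intro h
    rw [Submodule.orthogonal_eq_bot_iff] at h
    have := finrank_span_le_card (R := ℝ) ({u} : Set (Euc n))
    rw [h, finrank_top, finrank_euclideanSpace_fin] at this
    simp at this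
    omega
  obtain ⟨w, hw, hw0⟩ := Submodule.exists_mem_ne_zero_of_ne_bot h1
  rw [Submodule.mem_orthogonal_singleton_iff_inner_left] at hw
  have := norm_pos_iff.2 hw0
  refine ⟨‖w‖⁻¹ • w, ?_, ?_⟩
  · rw [norm_smul, norm_inv, norm_norm, inv_mul_cancel₀ this.ne']
  · rw [inner_smul_left, hw, mul_zero]

theorem essEq_iff {n : ℕ} {A B : Set (Euc n)} : essEq A B ↔ essSub A B ∧ essSub B A := by
  simp [essEq, essSub, measure_union_null_iff]

theorem essSub_trans {n : ℕ} {A B C : Set (Euc n)} (h : essSub A B) (h' : essSub B C) :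
    essSub A C := by
  refine measure_mono_null (t := (A \ B) ∪ (B \ C)) ?_ (measure_union_null h h')
  intro x hx
  by_cases hB : x ∈ B
  · exact Or.inr ⟨hB, hx.2⟩
  · exact Or.inl ⟨hx.1, hB⟩

theorem essSub_of_sub {n : ℕ} {A B : Set (Euc n)} (h : A ⊆ B) : essSub A B := by
  simp [essSub, Set.diff_eq_empty.2 h]

theorem aux_cyl_ball {n : ℕ} (u : Euc n) (hu : ‖u‖ = 1) (a : Euc n) (r : ℝ) :
    closedBall a r ⊆ cyl u a r := by
  intro y hy
  rw [mem_closedBall, dist_eq_norm] at hy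
  simp only [cyl, Set.mem_setOf_eq]
  refine le_trans ?_ hy
  refine (sq_le_sq₀ (norm_nonneg _) (norm_nonneg _)).1 ?_
  rw [@norm_sub_sq_real, inner_smul_right, norm_smul, hu, Real.norm_eq_abs, mul_one, sq_abs]
  nlinarith [sq_nonneg ⟪y - a, u⟫]


/-- Lemma 4.1: existence of the associated contraction `φ_∂` for a monotonic map
that respects `H`-cylinders and maps balls to balls, where `H = u⊥ + t₀u`. -/
theorem stmt0 {n : ℕ} (hn : 2 ≤ n) (u : Euc n) (hu : ‖u‖ = 1) (t₀ : ℝ)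
    (𝓔 : Set (Set (Euc n)))
    (h𝓔meas : ∀ A ∈ 𝓔, MeasurableSet A ∧ volume A ≠ ⊤)
    (h𝓔balls : ∀ (x : Euc n) (r : ℝ), 0 < r → closedBall x r ∈ 𝓔)
    (D : Set (Euc n) → Set (Euc n))
    (hDmeas : ∀ A ∈ 𝓔, MeasurableSet (D A) ∧ volume (D A) ≠ ⊤)
    (hmono : ∀ A ∈ 𝓔, ∀ B ∈ 𝓔, essSub A B → essSub (D A) (D B))
    (hcyl : ∀ A ∈ 𝓔, ∀ (c : Euc n) (ρ : ℝ), 0 < ρ →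
        essSub A (cyl u c ρ) → essSub (D A) (cyl u c ρ))
    (hballs : ∀ A ∈ 𝓔, (∃ (x : Euc n) (r : ℝ), 0 < r ∧ essEq A (closedBall x r)) →
        ∃ (x' : Euc n) (r' : ℝ), 0 < r' ∧ essEq (D A) (closedBall x' r')) :
    ∃ φ : ℝ → ℝ, LipschitzWith 1 φ ∧
      ∀ x : Euc n, ⟪x, u⟫ = 0 → ∀ t r : ℝ, 0 < r →
        essEq (D (closedBall (x + t • u) r)) (closedBall (x + φ t • u) r) := by
  obtain ⟨v, hv, hvu⟩ := aux_perp hn u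
  have hex : ∀ (z : Euc n) (r : ℝ), ∃ p : Euc n × ℝ, 0 < r →
      0 < p.2 ∧ essEq (D (closedBall z r)) (closedBall p.1 p.2) := by
    intro z r
    by_cases hr : 0 < r
    · obtain ⟨x', r', h1, h2⟩ := hballs _ (h𝓔balls z r hr)
        ⟨z, r, hr, by simp [essEq]⟩
      exact ⟨(x', r'), fun _ => ⟨h1, h2⟩⟩
    · exact ⟨0, fun h => absurd h hr⟩
  choose p hp using hex
  have F1 : ∀ (z z' : Euc n) (r r' : ℝ), 0 < r → ‖z - z'‖ ≤ r' - r →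
      ‖(p z r).1 - (p z' r').1‖ ≤ (p z' r').2 - (p z r).2 := by
    intro z z' r r' hr h
    have hr' : 0 < r' := by linarith [norm_nonneg (z - z')]
    obtain ⟨h1, h2⟩ := hp z r hr
    obtain ⟨h1', h2'⟩ := hp z' r' hr'
    rw [essEq_iff] at h2 h2'
    refine aux_balls v hv _ _ _ _ h1 (aux_sub _ _ h1 _ isClosed_closedBall ?_)
    refine essSub_trans h2.2 (essSub_trans ?_ h2'.1)
    refine hmono _ (h𝓔balls _ _ hr) _ (h𝓔balls _ _ hr') (essSub_of_sub ?_)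
    apply closedBall_subset_closedBall'
    rw [dist_eq_norm]
    linarith
  have F2 : ∀ (z : Euc n) (r : ℝ), 0 < r →
      ‖((p z r).1 - z) - ⟪(p z r).1 - z, u⟫ • u‖ + (p z r).2 ≤ r := by
    intro z r hr
    obtain ⟨h1, h2⟩ := hp z r hr
    rw [essEq_iff] at h2
    refine aux_cyl u v hu hv hvu _ _ _ _ h1 (aux_sub _ _ h1 _ (aux_cyl_closed _ _ _) ?_)
    refine essSub_trans h2.2 (hcyl _ (h𝓔balls _ _ hr) _ _ hr (essSub_of_sub ?_))
    exact aux_cyl_ball u hu z r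
  have F2' : ∀ (z : Euc n) (r : ℝ), 0 < r → |⟪(p z r).1 - z, v⟫| ≤ r := by
    intro z r hr
    have h := F2 z r hr
    have h1 := (hp z r hr).1
    have h3 := abs_real_inner_le_norm (((p z r).1 - z) - ⟪(p z r).1 - z, u⟫ • u) v
    rw [inner_sub_left, inner_smul_left, real_inner_comm, real_inner_comm, hv,
      real_inner_comm v u] at h3
    simp only [hvu, mul_zero, sub_zero, mul_one] at h3
    linarith
  have F3 : ∀ (z : Euc n) (r : ℝ), 0 < r → r ≤ (p z r).2 := by
    intro z r hr
    by_contra! hlt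
    obtain ⟨ε, hε, hε1, hε2⟩ : ∃ ε : ℝ, 0 < ε ∧ ε < r ∧ (p z r).2 + 2 * ε < r := by
      have := (hp z r hr).1
      exact ⟨(r - (p z r).2) / 3, by linarith, by linarith, by linarith⟩
    have key : ∀ σ : ℝ, |σ| = 1 →
        |⟪z + (σ * (r - ε)) • v - (p z r).1, v⟫| ≤ (p z r).2 + ε := by
      intro σ hσ
      have a1 := F1 (z + (σ * (r - ε)) • v) z ε r hε (by
        simp [norm_smul, hv, hσ, abs_of_pos (sub_pos.2 hε1)])
      have a2 := F2' (z + (σ * (r - ε)) • v) ε hε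
      have a3 := (hp (z + (σ * (r - ε)) • v) ε hε).1
      set y := z + (σ * (r - ε)) • v
      have a4 := abs_real_inner_le_norm ((p y ε).1 - (p z r).1) v
      rw [hv, mul_one] at a4
      have a5 : ⟪y - (p z r).1, v⟫ = ⟪(p y ε).1 - (p z r).1, v⟫ - ⟪(p y ε).1 - y, v⟫ := by
        rw [← inner_sub_left]; congr 1; abel
      rw [a5]
      refine (abs_sub _ _).trans ?_
      linarith
    have k1 := (abs_le.1 (key 1 (by simp))).2
    have k2 := (abs_le.1 (key (-1) (by simp))).1
    simp only [inner_sub_left, inner_add_left, inner_smul_left, real_inner_self_eq_norm_sq, hv] at k1 k2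
    simp at k1 k2
    linarith
  have F4 : ∀ (z : Euc n) (r : ℝ), 0 < r → (p z r).2 = r := by
    intro z r hr
    have := F2 z r hr
    have := F3 z r hr
    have := norm_nonneg (((p z r).1 - z) - ⟪(p z r).1 - z, u⟫ • u)
    linarith
  let g : Euc n → ℝ → ℝ := fun z r => ⟪(p z r).1 - z, u⟫
  have F4' : ∀ (z : Euc n) (r : ℝ), 0 < r → (p z r).1 = z + g z r • u := by
    intro z r hr
    have h1 := F2 z r hr
    rw [F4 z r hr] at h1
    have h2 : ‖((p z r).1 - z) - ⟪(p z r).1 - z, u⟫ • u‖ = 0 :=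
      le_antisymm (by linarith) (norm_nonneg _)
    rw [norm_eq_zero, sub_eq_zero] at h2
    rw [← sub_eq_iff_eq_add']
    exact h2
  have F1' : ∀ (z z' : Euc n) (r r' : ℝ), 0 < r → ‖z - z'‖ ≤ r' - r →
      ‖(z - z') + (g z r - g z' r') • u‖ ≤ r' - r := by
    intro z z' r r' hr h
    have hr' : 0 < r' := by linarith [norm_nonneg (z - z')]
    have := F1 z z' r r' hr h
    rw [F4 z r hr, F4 z' r' hr', F4' z r hr, F4' z' r' hr'] at this
    convert this using 2
    rw [sub_smul]; abel
  have F5 : ∀ (z z' : Euc n) (r r' : ℝ), 0 < r → ⟪z - z', u⟫ = 0 → r' = r + ‖z - z'‖ →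
      g z r = g z' r' := by
    intro z z' r r' hr h h'
    have h1 := F1' z z' r r' hr (by linarith)
    rw [h', add_sub_cancel_left] at h1
    have h2 := (sq_le_sq₀ (norm_nonneg _) (norm_nonneg _)).2 h1
    rw [← h', @norm_add_sq_real, inner_smul_right, h, norm_smul, hu, Real.norm_eq_abs, mul_one,
      sq_abs] at h2
    have h3 : (g z r - g z' r') ^ 2 = 0 := le_antisymm (by linarith) (sq_nonneg _)
    exact sub_eq_zero.1 (pow_eq_zero_iff two_ne_zero |>.1 h3)
  have F6 : ∀ (z : Euc n) (r r' : ℝ), 0 < r → r < r' → g z r = g z r' := by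
    intro z r r' hr h
    have e : ‖((r' - r) / 2) • v‖ = (r' - r) / 2 := by
      rw [norm_smul, hv, mul_one, Real.norm_of_nonneg (by linarith)]
    rw [F5 z (z + ((r' - r) / 2) • v) r (r + (r' - r) / 2) hr,
      F5 (z + ((r' - r) / 2) • v) z (r + (r' - r) / 2) r' (by linarith)]
    · simp [inner_smul_left, hvu]
    · rw [add_sub_cancel_left, e]; ring
    · simp [inner_smul_left, hvu]
    · rw [sub_add_cancel_left, norm_neg, e]
  have F6' : ∀ (z : Euc n) (r r' : ℝ), 0 < r → 0 < r' → g z r = g z r' := by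
    intro z r r' hr hr'
    rcases lt_trichotomy r r' with h | h | h
    · exact F6 z r r' hr h
    · rw [h]
    · exact (F6 z r' r hr' h).symm
  have F7 : ∀ (z z' : Euc n) (r r' : ℝ), 0 < r → 0 < r' → ⟪z - z', u⟫ = 0 →
      g z r = g z' r' := by
    intro z z' r r' hr hr' h
    rw [F5 z z' r _ hr h rfl]
    exact F6' _ _ _ (by positivity) hr'
  refine ⟨fun t => t + g (t • u) 1, ?_, ?_⟩
  · refine LipschitzWith.of_dist_le_mul fun t t' => ?_
    have h := F1' (t • u) (t' • u) 1 (1 + |t - t'|) one_pos (by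
      rw [← sub_smul, norm_smul, hu]; simp)
    rw [F6' (t' • u) (1 + |t - t'|) 1 (by positivity) one_pos, ← sub_smul, ← add_smul, norm_smul,
      hu, mul_one, add_sub_cancel_left, Real.norm_eq_abs] at h
    rw [Real.dist_eq, Real.dist_eq, NNReal.coe_one, one_mul]
    convert h using 2
    ring
  · intro x hx t r hr
    have h := (hp (x + t • u) r hr).2
    rw [F4 _ r hr, F4' _ r hr, F7 (x + t • u) (t • u) r 1 hr one_pos (by simpa using hx)] at h
    rwa [add_smul, ← add_assoc]
end
end

section
/- Let C be a body (a compact set equal to the closure of its interior) in ℝⁿ, n ≥ 1, and let ψ_k : ℝⁿ → ℝⁿ, k ∈ ℕ, be contractions. The following are equivalent: (i) the sequence (ψ_k) converges pointwise on C; (ii) (ψ_k) converges uniformly on C; (iii) (ψ_k) converges in L¹ on C, i.e., there is a function ψ with ∫_C ‖ψ_k(x) − ψ(x)‖ dx → 0. -/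
open MeasureTheory Metric Filter Topology

noncomputable section

theorem aux_pu {n : ℕ} (C : Set (Euc n)) (hC : IsCompact C)
    (ψ : ℕ → Euc n → Euc n) (hψ : ∀ k, LipschitzWith 1 (ψ k)) (f : Euc n → Euc n)
    (h : ∀ x ∈ C, Tendsto (fun k => ψ k x) atTop (𝓝 (f x))) :
    TendstoUniformlyOn ψ f atTop C := by
  have hd : ∀ k x y, dist (ψ k x) (ψ k y) ≤ dist x y := fun k x y => by
    simpa using (hψ k).dist_le_mul x y
  have hf : ∀ x ∈ C, ∀ y ∈ C, dist (f x) (f y) ≤ dist x y := fun x hx y hy =>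
    le_of_tendsto ((h x hx).dist (h y hy)) (Eventually.of_forall fun k => hd k x y)
  rw [Metric.tendstoUniformlyOn_iff]
  intro ε hε
  obtain ⟨t, htC, htf, ht⟩ := hC.finite_cover_balls (show 0 < ε / 3 by positivity)
  have hev : ∀ᶠ k in atTop, ∀ y ∈ t, dist (ψ k y) (f y) < ε / 3 :=
    (htf.eventually_all).2 fun y hy =>
      (Metric.tendsto_nhds.1 (h y (htC hy))) (ε / 3) (by positivity)
  filter_upwards [hev] with k hk x hx
  obtain ⟨y, hy, hxy⟩ := Set.mem_iUnion₂.1 (ht hx)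
  have h1 := hf x hx y (htC hy)
  have h2 := hd k y x
  have h3 := hk y hy
  rw [Metric.mem_ball] at hxy
  rw [dist_comm y x] at h2
  rw [dist_comm] at h3
  linarith [dist_triangle4 (f x) (f y) (ψ k y) (ψ k x)]

theorem aux_ul {n : ℕ} (C : Set (Euc n)) (hC : IsCompact C)
    (ψ : ℕ → Euc n → Euc n) (hψ : ∀ k, LipschitzWith 1 (ψ k)) (f : Euc n → Euc n)
    (h : TendstoUniformlyOn ψ f atTop C) :
    IntegrableOn f C ∧ Tendsto (fun k => ∫ x in C, ‖ψ k x - f x‖) atTop (𝓝 0) := by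
  have hc : ContinuousOn f C :=
    h.continuousOn (Frequently.of_forall fun k => (hψ k).continuous.continuousOn)
  refine ⟨hc.integrableOn_compact hC, ?_⟩
  rw [Metric.tendsto_nhds]
  intro ε hε
  set V := volume.real C with hV
  have hV0 : 0 ≤ V := measureReal_nonneg
  have hpos : 0 < ε / (V + 1) := by positivity
  filter_upwards [Metric.tendstoUniformlyOn_iff.1 h _ hpos] with k hk
  have := norm_setIntegral_le_of_norm_le_const (μ := volume) (s := C)
    (f := fun x => ‖ψ k x - f x‖) (C := ε / (V + 1)) hC.measure_lt_top
    (fun x hx => by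
      rw [norm_norm, ← dist_eq_norm, dist_comm]; exact (hk x hx).le)
  rw [dist_zero_right]
  refine this.trans_lt ?_
  rw [div_mul_eq_mul_div, div_lt_iff₀ (by positivity)]
  nlinarith

theorem aux_lp {n : ℕ} (C : Set (Euc n)) (hC : IsCompact C) (hCbody : C = closure (interior C))
    (ψ : ℕ → Euc n → Euc n) (hψ : ∀ k, LipschitzWith 1 (ψ k)) (f : Euc n → Euc n)
    (hf : IntegrableOn f C) (h : Tendsto (fun k => ∫ x in C, ‖ψ k x - f x‖) atTop (𝓝 0)) :
    ∀ x ∈ C, CauchySeq (fun k => ψ k x) := by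
  have hd : ∀ k x y, dist (ψ k x) (ψ k y) ≤ dist x y := fun k x y => by
    simpa using (hψ k).dist_le_mul x y
  have hi : ∀ k, IntegrableOn (fun x => ‖ψ k x - f x‖) C := fun k =>
    (((hψ k).continuous.continuousOn.integrableOn_compact hC).sub hf).norm
  intro x hx
  rw [Metric.cauchySeq_iff]
  intro ε hε
  set δ := ε / 8 with hδ
  have hδ0 : 0 < δ := by positivity
  rw [hCbody] at hx
  obtain ⟨y, hy, hxy⟩ := Metric.mem_closure_iff.1 hx δ hδ0
  obtain ⟨r, hr, hrC⟩ := Metric.isOpen_iff.1 isOpen_interior y hy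
  set B := ball y (min r δ) with hB
  have hBC : B ⊆ C := (ball_subset_ball (min_le_left _ _)).trans (hrC.trans interior_subset)
  have hBfin : volume B ≠ ⊤ := measure_ball_lt_top.ne
  have hBpos : 0 < volume.real B :=
    ENNReal.toReal_pos (measure_ball_pos volume y (lt_min hr hδ0)).ne' hBfin
  obtain ⟨N, hN⟩ := eventually_atTop.1
    ((Metric.tendsto_nhds.1 h) (volume.real B * δ) (by positivity))
  refine ⟨N, fun k hk m hm => ?_⟩
  have key : (dist (ψ k y) (ψ m y) - 2 * δ) * volume.real B ≤
      ∫ z in B, (‖ψ k z - f z‖ + ‖ψ m z - f z‖) := by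
    refine setIntegral_ge_of_const_le_real measurableSet_ball hBfin (fun z hz => ?_)
      (((hi k).add (hi m)).mono_set hBC)
    have hz' : dist z y < δ := (mem_ball.1 hz).trans_le (min_le_right _ _)
    have h1 := hd k y z
    have h2 := hd m z y
    rw [dist_comm y z] at h1
    have h3 := dist_triangle4 (ψ k y) (ψ k z) (ψ m z) (ψ m y)
    have h4 := dist_triangle_right (ψ k z) (ψ m z) (f z)
    rw [← dist_eq_norm, ← dist_eq_norm]
    linarith
  have k2 : ∫ z in B, (‖ψ k z - f z‖ + ‖ψ m z - f z‖) ≤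
      ∫ z in C, (‖ψ k z - f z‖ + ‖ψ m z - f z‖) :=
    setIntegral_mono_set ((hi k).add (hi m))
      (Eventually.of_forall fun z => by positivity) (HasSubset.Subset.eventuallyLE hBC)
  rw [integral_add (hi k) (hi m)] at k2
  have hk' := (le_abs_self _).trans_lt (by simpa [Real.dist_eq] using hN k hk)
  have hm' := (le_abs_self _).trans_lt (by simpa [Real.dist_eq] using hN m hm)
  have k3 : dist (ψ k y) (ψ m y) - 2 * δ < 2 * δ := by
    by_contra! hcon
    nlinarith
  have h1 := hd k x y
  have h2 := hd m y x
  rw [dist_comm y x] at h2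
  have h3 := dist_triangle4 (ψ k x) (ψ k y) (ψ m y) (ψ m x)
  linarith

/-- Lemma 4.6: for a sequence of contractions and a body `C` (a compact set equal to the
closure of its interior), pointwise convergence on `C`, uniform convergence on `C`, and
`L¹` convergence on `C` are all equivalent. -/
theorem stmt3 {n : ℕ} (hn : 1 ≤ n) (C : Set (Euc n))
    (hCcompact : IsCompact C) (hCbody : C = closure (interior C))
    (ψ : ℕ → Euc n → Euc n) (hψ : ∀ k, LipschitzWith 1 (ψ k)) :
    ((∃ f : Euc n → Euc n, ∀ x ∈ C, Tendsto (fun k => ψ k x) atTop (𝓝 (f x))) ↔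
      (∃ f : Euc n → Euc n, TendstoUniformlyOn ψ f atTop C)) ∧
    ((∃ f : Euc n → Euc n, TendstoUniformlyOn ψ f atTop C) ↔
      (∃ f : Euc n → Euc n, IntegrableOn f C ∧
        Tendsto (fun k => ∫ x in C, ‖ψ k x - f x‖) atTop (𝓝 0))) := by
  refine ⟨⟨fun ⟨f, h⟩ => ⟨f, aux_pu C hCcompact ψ hψ f h⟩,
      fun ⟨f, h⟩ => ⟨f, fun x hx => h.tendsto_at hx⟩⟩,
    fun ⟨f, h⟩ => ⟨f, aux_ul C hCcompact ψ hψ f h⟩, fun ⟨f, hf, h⟩ => ?_⟩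
  have hc := aux_lp C hCcompact hCbody ψ hψ f hf h
  have hex : ∀ x, ∃ a, x ∈ C → Tendsto (fun k => ψ k x) atTop (𝓝 a) := fun x => by
    by_cases hx : x ∈ C
    · obtain ⟨a, ha⟩ := cauchySeq_tendsto_of_complete (hc x hx)
      exact ⟨a, fun _ => ha⟩
    · exact ⟨0, fun h => absurd h hx⟩
  choose g hg using hex
  exact ⟨g, aux_pu C hCcompact ψ hψ g hg⟩
end
end

section
/- Let φ : ℝ → ℝ be a contraction (1-Lipschitz function) and suppose there exists a point s₀ ∈ ℝ at which φ is differentiable with φ′(s₀) ∉ {0, 1, −1}. Then φ does not belong to the class ℐ. -/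
open Filter Topology

noncomputable section

/-- The class `ℐ` of contractions `φ : ℝ → ℝ` such that whenever `a < b` and `φ(s)` lies in
the open interval with endpoints `φ(a)` and `φ(b)` for every `s ∈ (a,b)`, then
`|φ(b) − φ(a)| = b − a` (equivalently, `φ` is affine with slope `±1` on `(a,b)`). -/
def memI (φ : ℝ → ℝ) : Prop :=
  LipschitzWith 1 φ ∧ ∀ a b : ℝ, a < b →
    (∀ s ∈ Set.Ioo a b, φ s ∈ Set.Ioo (min (φ a) (φ b)) (max (φ a) (φ b))) →
    |φ b - φ a| = b - a

theorem aux_pos (φ : ℝ → ℝ) (s₀ d : ℝ) (hderiv : HasDerivAt φ d s₀)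
    (hd0 : 0 < d) (hd1 : d < 1) : ¬ memI φ := by
  rintro ⟨hL, hI⟩
  have hc : Continuous φ := hL.continuous
  obtain ⟨e, he0, hed, he1⟩ : ∃ e : ℝ, 0 < e ∧ e < d ∧ d + e < 1 := by
    refine ⟨min d (1 - d) / 2, ?_, ?_, ?_⟩
    · have : 0 < min d (1 - d) := lt_min hd0 (by linarith)
      linarith
    · have := min_le_left d (1 - d)
      linarith
    · have := min_le_right d (1 - d)
      linarith
  have h1 := (hasDerivAt_iff_isLittleO.mp hderiv).def he0
  obtain ⟨r, hr, h2⟩ := Metric.eventually_nhds_iff.mp h1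
  have key : ∀ s, |s - s₀| ≤ r / 2 → |φ s - φ s₀ - (s - s₀) * d| ≤ e * |s - s₀| := by
    intro s hs
    have := h2 (y := s) (by rw [Real.dist_eq]; linarith)
    simpa [Real.norm_eq_abs] using this
  have kp : ∀ s, s₀ ≤ s → s ≤ s₀ + r / 2 →
      (d - e) * (s - s₀) ≤ φ s - φ s₀ ∧ φ s - φ s₀ ≤ (d + e) * (s - s₀) := by
    intro s h3 h4
    have h5 : |s - s₀| = s - s₀ := abs_of_nonneg (by linarith)
    have := key s (by rw [h5]; linarith)
    rw [h5, abs_le] at this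
    constructor <;> linarith
  have km : ∀ s, s ≤ s₀ → s₀ - r / 2 ≤ s →
      (d - e) * (s₀ - s) ≤ φ s₀ - φ s ∧ φ s₀ - φ s ≤ (d + e) * (s₀ - s) := by
    intro s h3 h4
    have h5 : |s - s₀| = s₀ - s := by rw [abs_of_nonpos (by linarith)]; ring
    have := key s (by rw [h5]; linarith)
    rw [h5, abs_le] at this
    constructor <;> linarith
  have hde : 0 < d - e := by linarith
  have hpr : 0 < (d - e) * (r / 2) := by positivity
  obtain ⟨b, ⟨⟨hb1, hb2⟩, hb3⟩, hbl⟩ :=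
    (isCompact_Icc.inter_right (isClosed_le continuous_const hc) :
      IsCompact (Set.Icc s₀ (s₀ + r / 2) ∩ {s | φ (s₀ + r / 2) ≤ φ s})).exists_isLeast
      ⟨s₀ + r / 2, ⟨by linarith, le_refl _⟩, le_refl (φ (s₀ + r / 2))⟩
  obtain ⟨a, ⟨⟨ha1, ha2⟩, ha3⟩, hal⟩ :=
    (isCompact_Icc.inter_right (isClosed_le hc continuous_const) :
      IsCompact (Set.Icc (s₀ - r / 2) s₀ ∩ {s | φ s ≤ φ (s₀ - r / 2)})).exists_isGreatest
      ⟨s₀ - r / 2, ⟨le_refl _, by linarith⟩, le_refl (φ (s₀ - r / 2))⟩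
  simp only [Set.mem_setOf_eq] at hb3 ha3
  have hp := (kp (s₀ + r / 2) (by linarith) le_rfl).1
  have hm := (km (s₀ - r / 2) (by linarith) le_rfl).1
  rw [add_sub_cancel_left] at hp
  rw [sub_sub_cancel] at hm
  have hB : φ s₀ < φ b := by linarith
  have hA : φ a < φ s₀ := by linarith
  have hb4 : s₀ < b := lt_of_le_of_ne hb1 (by rintro rfl; exact lt_irrefl _ hB)
  have := hI a b (by linarith) (by
    intro s hs
    rw [min_eq_left (by linarith), max_eq_right (by linarith)]
    rcases le_total s₀ s with h | h
    · have h6 := (kp s h (by linarith [hs.2])).1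
      have h7 : 0 ≤ (d - e) * (s - s₀) := mul_nonneg hde.le (by linarith)
      refine ⟨by linarith, ?_⟩
      by_contra hcon
      have := hbl ⟨⟨h, by linarith [hs.2]⟩, show φ (s₀ + r / 2) ≤ φ s by linarith⟩
      linarith [hs.2]
    · have h6 := (km s h (by linarith [hs.1])).1
      have h7 : 0 ≤ (d - e) * (s₀ - s) := mul_nonneg hde.le (by linarith)
      refine ⟨?_, by linarith⟩
      by_contra hcon
      have := hal ⟨⟨by linarith [hs.1], h⟩, show φ s ≤ φ (s₀ - r / 2) by linarith⟩
      linarith [hs.1])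
  rw [abs_of_pos (by linarith)] at this
  have h8 := (kp b hb1 hb2).2
  have h9 := (km a ha2 ha1).2
  nlinarith [mul_pos (show 0 < 1 - (d + e) by linarith) (show 0 < b - a by linarith)]

theorem memI_neg (φ : ℝ → ℝ) (h : memI φ) : memI (-φ) := by
  obtain ⟨hL, hI⟩ := h
  refine ⟨hL.neg, fun a b hab hs => ?_⟩
  have := hI a b hab (by
    intro s hs'
    have := hs s hs'
    simp only [Pi.neg_apply, min_neg_neg, max_neg_neg, Set.mem_Ioo, neg_lt_neg_iff] at this
    exact ⟨this.2, this.1⟩)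
  rw [← this, ← abs_neg]
  congr 1
  simp only [Pi.neg_apply]
  ring

/-- Lemma 6.7: a contraction which has, at some point, a derivative different from
`0`, `1` and `-1` does not belong to the class `ℐ`. -/
theorem stmt4 (φ : ℝ → ℝ) (hφ : LipschitzWith 1 φ)
    (s₀ d : ℝ) (hderiv : HasDerivAt φ d s₀)
    (hd0 : d ≠ 0) (hd1 : d ≠ 1) (hdm1 : d ≠ -1) :
    ¬ memI φ := by
  intro h
  have hn : ‖d‖ ≤ 1 := by simpa using hderiv.le_of_lipschitz hφ
  rw [Real.norm_eq_abs, abs_le] at hn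
  rcases lt_or_gt_of_ne hd0 with h0 | h0
  · exact aux_pos (-φ) s₀ (-d) hderiv.neg (by linarith)
      (by have := lt_of_le_of_ne hn.1 (Ne.symm hdm1); linarith) (memI_neg φ h)
  · exact aux_pos φ s₀ d hderiv h0 (lt_of_le_of_ne hn.2 hd1) h
end
end

section
/- The class ℐ of contractions on ℝ has the following properties: (i) the identity map and t ↦ |t| belong to ℐ; (ii) if φ ∈ ℐ then −φ and s ↦ φ(−s) belong to ℐ; (iii) if φ ∈ ℐ then φ(· + s₀) and φ(·) + s₀ belong to ℐ for every s₀ ∈ ℝ; (iv) if φ₁, φ₂ ∈ ℐ then φ₂ ∘ φ₁ ∈ ℐ; (v) if (φ_k) is a sequence in ℐ converging pointwise to φ, then φ ∈ ℐ. -/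
open Filter Topology

noncomputable section

def halfI (φ : ℝ → ℝ) : Prop :=
  ∀ a b : ℝ, a < b → φ a < φ b → (∀ s ∈ Set.Ioo a b, φ a < φ s ∧ φ s < φ b) →
    b - a ≤ φ b - φ a

theorem lip_abs {φ : ℝ → ℝ} (h : LipschitzWith 1 φ) (x y : ℝ) : |φ x - φ y| ≤ |x - y| := by
  have := h.dist_le_mul x y
  simpa [Real.dist_eq] using this

theorem lip_of_abs {φ : ℝ → ℝ} (h : ∀ x y, |φ x - φ y| ≤ |x - y|) : LipschitzWith 1 φ := by
  apply LipschitzWith.of_dist_le_mul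
  intro x y
  simpa [Real.dist_eq] using h x y

theorem memI_of_half {φ : ℝ → ℝ} (h : LipschitzWith 1 φ) (h1 : halfI φ)
    (h2 : halfI (fun s => -(φ s))) : memI φ := by
  refine ⟨h, fun a b hab hs => ?_⟩
  have hl := lip_abs h b a
  rw [abs_of_pos (sub_pos.2 hab)] at hl
  apply le_antisymm hl
  rcases lt_trichotomy (φ a) (φ b) with hlt | heq | hgt
  · rw [min_eq_left hlt.le, max_eq_right hlt.le] at hs
    exact (h1 a b hab hlt hs).trans (le_abs_self _)
  · have := hs ((a + b) / 2) ⟨by linarith, by linarith⟩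
    rw [heq] at this
    simp at this
  · rw [min_eq_right hgt.le, max_eq_left hgt.le] at hs
    have := h2 a b hab (by simpa using hgt) (fun s hss => by
      have := hs s hss
      constructor <;> simp [this.1, this.2])
    have h3 := neg_le_abs (φ b - φ a)
    simp only at this
    linarith

theorem memI.half {φ : ℝ → ℝ} (h : memI φ) : halfI φ := by
  intro a b hab hlt hs
  have := h.2 a b hab (by
    rw [min_eq_left hlt.le, max_eq_right hlt.le]; exact hs)
  rw [abs_of_pos (sub_pos.2 hlt)] at this
  exact this.ge

theorem memI.neg {φ : ℝ → ℝ} (h : memI φ) : memI (fun s => -(φ s)) := by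
  refine ⟨lip_of_abs fun x y => ?_, fun a b hab hs => ?_⟩
  · have := lip_abs h.1 y x
    rw [abs_sub_comm y x] at this
    rwa [neg_sub_neg]
  · have := h.2 a b hab (fun s hss => by
      have := hs s hss
      simp only [min_neg_neg, max_neg_neg, Set.mem_Ioo, neg_lt_neg_iff] at this
      exact ⟨this.2, this.1⟩)
    rw [← this, abs_sub_comm]
    congr 1; ring

theorem memI.refl' {φ : ℝ → ℝ} (h : memI φ) : memI (fun s => φ (-s)) := by
  refine ⟨lip_of_abs fun x y => ?_, fun a b hab hs => ?_⟩
  · have := lip_abs h.1 (-x) (-y)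
    rwa [neg_sub_neg, abs_sub_comm y x] at this
  · have := h.2 (-b) (-a) (by linarith) (fun s hss => by
      have := hs (-s) ⟨by linarith [hss.2], by linarith [hss.1]⟩
      simpa only [neg_neg, min_comm (φ (-b)), max_comm (φ (-b))] using this)
    rw [abs_sub_comm] at this
    simp only
    linarith

theorem memI.shift {φ : ℝ → ℝ} (h : memI φ) (c : ℝ) : memI (fun s => φ (s + c)) := by
  refine ⟨lip_of_abs fun x y => ?_, fun a b hab hs => ?_⟩
  · have := lip_abs h.1 (x + c) (y + c)
    rwa [add_sub_add_right_eq_sub] at this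
  · have := h.2 (a + c) (b + c) (by linarith) (fun s hss => by
      have := hs (s - c) ⟨by linarith [hss.1], by linarith [hss.2]⟩
      simpa only [sub_add_cancel] using this)
    simp only
    linarith

theorem memI.addc {φ : ℝ → ℝ} (h : memI φ) (c : ℝ) : memI (fun s => φ s + c) := by
  refine ⟨lip_of_abs fun x y => ?_, fun a b hab hs => ?_⟩
  · have := lip_abs h.1 x y
    rwa [add_sub_add_right_eq_sub]
  · have := h.2 a b (by linarith) (fun s hss => by
      have := hs s hss
      simpa only [min_add_add_right, max_add_add_right, Set.mem_Ioo, add_lt_add_iff_right]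
        using this)
    simpa only [add_sub_add_right_eq_sub]

theorem memI_id : memI (fun t : ℝ => t) :=
  ⟨lip_of_abs fun _ _ => le_rfl, fun a b hab _ => abs_of_pos (sub_pos.2 hab)⟩

theorem memI_abs : memI (fun t : ℝ => |t|) := by
  refine ⟨lip_of_abs fun x y => abs_abs_sub_abs_le x y, fun a b hab hs => ?_⟩
  simp only at *
  rcases le_or_gt 0 a with ha | ha
  · rw [abs_of_nonneg ha, abs_of_nonneg (ha.trans hab.le), abs_of_pos (sub_pos.2 hab)]
  rcases le_or_gt b 0 with hb | hb
  · rw [abs_of_neg ha, abs_of_nonpos hb, abs_of_neg (by linarith)]; ring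
  have := (hs 0 ⟨ha, hb⟩).1
  rw [abs_zero] at this
  rcases min_lt_iff.1 this with h | h
  · exact absurd h (not_lt.2 (abs_nonneg _))
  · exact absurd h (not_lt.2 (abs_nonneg _))

/-- A continuous function on `[a,b]` avoiding the end values inside stays between them. -/
theorem between {f : ℝ → ℝ} (hf : Continuous f) {a b : ℝ} (hab : a < b) (hlt : f a < f b)
    (ha : ∀ s ∈ Set.Ioo a b, f s ≠ f a) (hb : ∀ s ∈ Set.Ioo a b, f s ≠ f b) :
    ∀ s ∈ Set.Ioo a b, f a < f s ∧ f s < f b := by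
  intro s hs
  constructor
  · by_contra hcon
    have h1 : f s < f a := lt_of_le_of_ne (not_lt.1 hcon) (ha s hs)
    obtain ⟨t, ht, hte⟩ := intermediate_value_Ioo hs.2.le hf.continuousOn ⟨h1, hlt⟩
    exact ha t ⟨hs.1.trans ht.1, ht.2⟩ hte
  · by_contra hcon
    have h1 : f b < f s := lt_of_le_of_ne (not_lt.1 hcon) (hb s hs).symm
    obtain ⟨t, ht, hte⟩ := intermediate_value_Ioo hs.1.le hf.continuousOn ⟨hlt, h1⟩
    exact hb t ⟨ht.1, ht.2.trans hs.2⟩ hte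

theorem half_comp_aux {f g : ℝ → ℝ} (hf : memI f) (hg : memI g) {a b : ℝ} (hab : a < b)
    (hlt : f a < f b) (hG : g (f a) < g (f b))
    (hs : ∀ s ∈ Set.Ioo a b, g (f a) < g (f s) ∧ g (f s) < g (f b)) :
    b - a ≤ g (f b) - g (f a) := by
  have h1 := between hf.1.continuous hab hlt
    (fun s h e => by have := (hs s h).1; rw [e] at this; exact lt_irrefl _ this)
    (fun s h e => by have := (hs s h).2; rw [e] at this; exact lt_irrefl _ this)
  have h2 := hf.half a b hab hlt h1
  have h3 := hg.half (f a) (f b) hlt hG (fun u hu => by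
    obtain ⟨t, ht, rfl⟩ := intermediate_value_Ioo hab.le hf.1.continuous.continuousOn hu
    exact hs t ht)
  linarith

theorem half_comp {f g : ℝ → ℝ} (hf : memI f) (hg : memI g) : halfI (g ∘ f) := by
  intro a b hab hG hs
  simp only [Function.comp] at *
  rcases lt_trichotomy (f a) (f b) with hlt | heq | hgt
  · exact half_comp_aux hf hg hab hlt hG hs
  · rw [heq] at hG; exact absurd hG (lt_irrefl _)
  · have := half_comp_aux hf.neg hg.refl' hab (neg_lt_neg hgt)
    simp only [neg_neg] at this
    exact this hG hs

theorem memI.comp {f g : ℝ → ℝ} (hf : memI f) (hg : memI g) : memI (g ∘ f) := by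
  refine memI_of_half (by simpa using hg.1.comp hf.1) (half_comp hf hg) ?_
  exact half_comp (g := fun s => -(g s)) hf hg.neg

theorem unif {F : ℕ → ℝ → ℝ} {φ : ℝ → ℝ} (hF : ∀ k, LipschitzWith 1 (F k))
    (hφ : LipschitzWith 1 φ)
    (h : ∀ t : ℝ, Tendsto (fun k => F k t) atTop (𝓝 (φ t))) (a b ε : ℝ) (hε : 0 < ε) :
    ∃ k, ∀ s ∈ Set.Icc a b, |F k s - φ s| < ε := by
  obtain ⟨t, -, ht, hc⟩ := (isCompact_Icc (a := a) (b := b)).finite_cover_balls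
    (show 0 < ε / 3 by linarith)
  have : ∀ᶠ k in atTop, ∀ x ∈ t, |F k x - φ x| < ε / 3 := by
    rw [ht.eventually_all]
    intro x _
    have := Metric.tendsto_nhds.1 (h x) (ε / 3) (by linarith)
    simpa [Real.dist_eq] using this
  obtain ⟨k, hk⟩ := this.exists
  refine ⟨k, fun s hs => ?_⟩
  have hm := hc hs
  simp only [Set.mem_iUnion, Metric.mem_ball, Real.dist_eq] at hm
  obtain ⟨x, hx, hsx⟩ := hm
  have h1 := abs_le.1 ((lip_abs (hF k) s x).trans hsx.le)
  have h2 := abs_le.1 ((lip_abs hφ s x).trans hsx.le)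
  have h3 := abs_lt.1 (hk x hx)
  rw [abs_lt]
  constructor <;> linarith [h1.1, h1.2, h2.1, h2.2, h3.1, h3.2]

theorem half_lim {F : ℕ → ℝ → ℝ} {φ : ℝ → ℝ} (hF : ∀ k, memI (F k))
    (hφ : LipschitzWith 1 φ)
    (h : ∀ t : ℝ, Tendsto (fun k => F k t) atTop (𝓝 (φ t))) : halfI φ := by
  intro a b hab hlt hs
  by_contra hcon
  obtain ⟨δ, hδ, hδ2⟩ : ∃ δ, 0 < δ ∧ φ b - φ a + 4 * δ < b - a :=
    ⟨(b - a - (φ b - φ a)) / 8, by linarith, by linarith⟩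
  have hφc := hφ.continuous
  obtain ⟨p, hp, hpm⟩ := (isCompact_Icc (a := a + δ) (b := b)).exists_isMinOn
    ⟨b, by linarith, le_rfl⟩ hφc.continuousOn
  obtain ⟨q, hq, hqm⟩ := (isCompact_Icc (a := a) (b := b - δ)).exists_isMaxOn
    ⟨a, le_rfl, by linarith⟩ hφc.continuousOn
  have hp1 : φ a < φ p := by
    rcases hp.2.lt_or_eq with h' | h'
    · exact (hs p ⟨by linarith [hp.1], h'⟩).1
    · rwa [h']
  have hq1 : φ q < φ b := by
    rcases hq.1.lt_or_eq with h' | h'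
    · exact (hs q ⟨h', by linarith [hq.2]⟩).2
    · rwa [← h']
  have hbd : ∀ s ∈ Set.Icc a b, φ a ≤ φ s ∧ φ s ≤ φ b := by
    intro s hsI
    rcases hsI.1.lt_or_eq with h1 | h1
    · rcases hsI.2.lt_or_eq with h2 | h2
      · exact ⟨(hs s ⟨h1, h2⟩).1.le, (hs s ⟨h1, h2⟩).2.le⟩
      · rw [h2]; exact ⟨hlt.le, le_rfl⟩
    · rw [← h1]; exact ⟨le_rfl, hlt.le⟩
  obtain ⟨ε, hε, e1, e2, e3, e4⟩ : ∃ ε, 0 < ε ∧ φ a + 3 * ε < φ p ∧ φ q + 3 * ε < φ b ∧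
      φ a + 3 * ε < φ b ∧ ε < δ := by
    have hpos : 0 < min (min (φ p - φ a) (φ b - φ q)) (min (φ b - φ a) δ) := by
      simp [hp1, hq1, hlt, hδ]
    refine ⟨_ / 4, div_pos hpos (by norm_num), ?_⟩
    have g1 := (min_le_left (min (φ p - φ a) (φ b - φ q)) (min (φ b - φ a) δ)).trans (min_le_left _ _)
    have g2 := (min_le_left (min (φ p - φ a) (φ b - φ q)) (min (φ b - φ a) δ)).trans (min_le_right _ _)
    have g3 := (min_le_right (min (φ p - φ a) (φ b - φ q)) (min (φ b - φ a) δ)).trans (min_le_left _ _)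
    have g4 := (min_le_right (min (φ p - φ a) (φ b - φ q)) (min (φ b - φ a) δ)).trans (min_le_right _ _)
    refine ⟨?_, ?_, ?_, ?_⟩ <;> linarith
  obtain ⟨k, hk⟩ := unif (fun k => (hF k).1) hφ h a b ε hε
  have hkc := (hF k).1.continuous
  have hku : ∀ s ∈ Set.Icc a b, F k s < φ s + ε ∧ φ s - ε < F k s := fun s hsI => by
    have := abs_lt.1 (hk s hsI)
    constructor <;> linarith [this.1, this.2]
  have haI : a ∈ Set.Icc a b := ⟨le_rfl, hab.le⟩
  have hbI : b ∈ Set.Icc a b := ⟨hab.le, le_rfl⟩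
  -- last point below
  obtain ⟨x, ⟨hxI, hxc⟩, hxm⟩ :=
    (isCompact_Icc.inter_right (isClosed_le hkc continuous_const) :
      IsCompact (Set.Icc a b ∩ {s | F k s ≤ φ a + ε})).exists_isGreatest
      ⟨a, haI, (hku a haI).1.le⟩
  have hxδ : x < a + δ := by
    by_contra hc
    have h1 : φ p ≤ φ x := hpm (⟨not_lt.1 hc, hxI.2⟩ : x ∈ Set.Icc (a + δ) b)
    have h2 := (hku x hxI).2
    simp only [Set.mem_setOf_eq] at hxc
    linarith
  have hxb : x ≤ b := hxI.2
  obtain ⟨y, ⟨hyI, hyc⟩, hym⟩ :=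
    (isCompact_Icc.inter_right (isClosed_le continuous_const hkc) :
      IsCompact (Set.Icc x b ∩ {s | φ b - ε ≤ F k s})).exists_isLeast
      ⟨b, ⟨hxb, le_rfl⟩, (hku b hbI).2.le⟩
  have hyI' : y ∈ Set.Icc a b := ⟨hxI.1.trans hyI.1, hyI.2⟩
  simp only [Set.mem_setOf_eq] at hxc hyc
  have hyδ : b - δ < y := by
    by_contra hc
    have h1 : φ y ≤ φ q := hqm (⟨hyI'.1, not_lt.1 hc⟩ : y ∈ Set.Icc a (b - δ))
    have h2 := (hku y hyI').1
    linarith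
  have hxy : x < y := by linarith
  have key := (hF k).half x y hxy (by linarith) (fun s hsI => by
    have hsI' : s ∈ Set.Icc a b := ⟨hxI.1.trans hsI.1.le, hsI.2.le.trans hyI.2⟩
    constructor
    · by_contra hc
      have := hxm (⟨hsI', (not_lt.1 hc).trans hxc⟩ : s ∈ Set.Icc a b ∩ {s | F k s ≤ φ a + ε})
      linarith [hsI.1]
    · by_contra hc
      have := hym (⟨⟨hsI.1.le, hsI'.2⟩, hyc.trans (not_lt.1 hc)⟩ :
        s ∈ Set.Icc x b ∩ {s | φ b - ε ≤ F k s})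
      linarith [hsI.2])
  have k1 := (hku x hxI).2
  have k2 := (hku y hyI').1
  have k3 := (hbd x hxI).1
  have k4 := (hbd y hyI').2
  linarith

theorem memI_lim {F : ℕ → ℝ → ℝ} {φ : ℝ → ℝ} (hF : ∀ k, memI (F k))
    (h : ∀ t : ℝ, Tendsto (fun k => F k t) atTop (𝓝 (φ t))) : memI φ := by
  have hφ : LipschitzWith 1 φ := lip_of_abs fun x y =>
    le_of_tendsto ((h x).sub (h y)).abs (Eventually.of_forall fun k => lip_abs (hF k).1 x y)
  refine memI_of_half hφ (half_lim hF hφ h) ?_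
  refine half_lim (F := fun k s => -(F k s)) (fun k => (hF k).neg) ?_ (fun t => (h t).neg)
  exact lip_of_abs fun x y => by
    have := lip_abs hφ y x
    rw [abs_sub_comm y x] at this
    rwa [neg_sub_neg]

/-- Lemma 6.5: closure properties of the class `ℐ`:
(i) it contains the identity and the absolute value;
(ii) it is bi-reflection invariant;
(iii) it is bi-translation invariant;
(iv) it is closed under composition;
(v) it is closed under pointwise convergence. -/
theorem stmt5 :
    (memI (fun t : ℝ => t) ∧ memI (fun t : ℝ => |t|)) ∧
    (∀ φ : ℝ → ℝ, memI φ →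
      memI (fun s => -(φ s)) ∧ memI (fun s => φ (-s))) ∧
    (∀ (φ : ℝ → ℝ) (s₀ : ℝ), memI φ →
      memI (fun s => φ (s + s₀)) ∧ memI (fun s => φ s + s₀)) ∧
    (∀ φ₁ φ₂ : ℝ → ℝ, memI φ₁ → memI φ₂ → memI (φ₂ ∘ φ₁)) ∧
    (∀ (φk : ℕ → ℝ → ℝ) (φ : ℝ → ℝ), (∀ k, memI (φk k)) →
      (∀ t : ℝ, Tendsto (fun k => φk k t) atTop (𝓝 (φ t))) → memI φ) := by
  exact ⟨⟨memI_id, memI_abs⟩, fun _ h => ⟨h.neg, h.refl'⟩, fun _ c h => ⟨h.shift c, h.addc c⟩,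
    fun _ _ h1 h2 => h1.comp h2, fun _ _ h1 h2 => memI_lim h1 h2⟩
end
end

section
/- Every finite composition φ_m ∘ ⋯ ∘ φ_1 of functions on ℝ, where each φ_i is of the form t ↦ |t − c_i| + c_i or of the form t ↦ c_i − |t − c_i| for some c_i ∈ ℝ (these are the contractions associated with polarizations with respect to hyperplanes parallel to a fixed hyperplane H, with either orientation), belongs to the class ℐ. -/
open Filter Topology

noncomputable section

theorem memI_neg_aux {φ : ℝ → ℝ} (h : memI φ) : memI (fun t => - φ t) := by
  refine ⟨h.1.neg, fun a b hab hs => ?_⟩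
  have := h.2 a b hab (fun s hs' => by
    have := hs s hs'
    simp only [Set.mem_Ioo, min_lt_iff, lt_max_iff] at this ⊢
    grind)
  rw [← this, ← abs_neg]
  congr 1
  ring

theorem sign_aux {f : ℝ → ℝ} (hf : Continuous f) {a b m s : ℝ} (hm : m ∈ Set.Ioo a b)
    (hs : s ∈ Set.Icc a b) (h0 : ∀ s ∈ Set.Ioo a b, f s ≠ 0) (hfm : 0 < f m) : 0 ≤ f s := by
  by_contra hneg
  push Not at hneg
  obtain ⟨z, hz, hz0⟩ := intermediate_value_uIcc (a := s) (b := m) hf.continuousOn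
    (Set.mem_uIcc.2 (Or.inl ⟨hneg.le, hfm.le⟩))
  refine h0 z ?_ hz0
  have hzs : z ≠ s := by rintro rfl; linarith
  have hzm : z ≠ m := by rintro rfl; linarith
  rw [Set.mem_uIcc] at hz
  simp only [Set.mem_Ioo, Set.mem_Icc] at *
  grind

theorem memI_congr_aux {φ ψ : ℝ → ℝ} (h : memI φ) {a b c : ℝ} (hab : a < b)
    (hp : ∀ s ∈ Set.Icc a b, ψ s = φ s + c)
    (hs : ∀ s ∈ Set.Ioo a b, ψ s ∈ Set.Ioo (min (ψ a) (ψ b)) (max (ψ a) (ψ b))) :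
    |ψ b - ψ a| = b - a := by
  have ha := hp a ⟨le_rfl, hab.le⟩
  have hb := hp b ⟨hab.le, le_rfl⟩
  rw [← h.2 a b hab (fun s hs' => by
    have h1 := hs s hs'
    have h2 := hp s ⟨hs'.1.le, hs'.2.le⟩
    simp only [Set.mem_Ioo, min_lt_iff, lt_max_iff] at h1 ⊢
    grind), ha, hb]
  congr 1
  ring

theorem memI_pol_aux {φ : ℝ → ℝ} (h : memI φ) (c : ℝ) : memI (fun t => |φ t - c| + c) := by
  have hL : LipschitzWith 1 (fun t => |φ t - c| + c) := by
    apply LipschitzWith.of_dist_le_mul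
    intro x y
    have := h.1.dist_le_mul x y
    simp only [Real.dist_eq, NNReal.coe_one, one_mul] at this ⊢
    refine le_trans ?_ this
    have := abs_abs_sub_abs_le_abs_sub (φ x - c) (φ y - c)
    simpa using this
  refine ⟨hL, fun a b hab hs => ?_⟩
  have hc : Continuous (fun t => φ t - c) := h.1.continuous.sub continuous_const
  have h0 : ∀ s ∈ Set.Ioo a b, φ s - c ≠ 0 := by
    intro s hs' he
    have := (hs s hs').1
    simp only [he, abs_zero, min_lt_iff] at this
    have := abs_nonneg (φ a - c)
    have := abs_nonneg (φ b - c)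
    grind
  have hm : (a + b) / 2 ∈ Set.Ioo a b := ⟨by linarith, by linarith⟩
  rcases lt_or_gt_of_ne (h0 _ hm) with h1 | h1
  · refine memI_congr_aux (ψ := fun t => |φ t - c| + c) (memI_neg_aux h) (c := 2 * c) hab (fun s hs' => ?_) hs
    have := sign_aux hc.neg hm hs' (fun s hs => neg_ne_zero.2 (h0 s hs)) (by simpa using h1)
    simp only [Pi.neg_apply] at this
    rw [abs_of_nonpos (by linarith)]
    ring
  · refine memI_congr_aux (ψ := fun t => |φ t - c| + c) h (c := 0) hab (fun s hs' => ?_) hs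
    have := sign_aux hc hm hs' h0 h1
    rw [abs_of_nonneg this]
    ring

/-- Corollary 6.6: every finite composition of the one-dimensional contractions associated
with polarizations with respect to hyperplanes parallel to a fixed hyperplane (namely the
maps `t ↦ |t − c| + c` and `t ↦ c − |t − c|`) belongs to the class `ℐ`. -/
theorem stmt6 (l : List (ℝ → ℝ))
    (hl : ∀ f ∈ l, (∃ c : ℝ, f = fun t => |t - c| + c) ∨
                   (∃ c : ℝ, f = fun t => c - |t - c|)) :
    memI (l.foldr (· ∘ ·) id) := by
  induction l with
  | nil =>
    refine ⟨LipschitzWith.id, fun a b hab _ => ?_⟩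
    simp only [List.foldr_nil, id]
    exact abs_of_pos (by linarith)
  | cons f l ih =>
    have ih' := ih (fun g hg => hl g (List.mem_cons_of_mem _ hg))
    rw [List.foldr_cons]
    rcases hl f List.mem_cons_self with ⟨c, rfl⟩ | ⟨c, rfl⟩
    · exact memI_pol_aux ih' c
    · convert memI_neg_aux (memI_pol_aux (memI_neg_aux ih') (-c)) using 1
      funext t
      simp only [Function.comp]
      rw [show ∀ x : ℝ, -x - -c = -(x - c) by intro x; ring, abs_neg]
      ring
end
end
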